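/- arXiv:1404.3327 — 3 statements merged into one kernel-verified Lean document; each statement's English description precedes it below -/
import Mathlib

section
/- Let ι be a nonempty finite index type, A : Matrix ι ι ℝ an entrywise nonnegative matrix, and w : ι → ℝ with w i > 0 for all i. Then ‖A.mulVec w‖_w is the greatest element of the set { ‖A.mulVec x‖_w | x : ι → ℝ, ‖x‖_w ≤ 1 }; equivalently, ‖A.mulVec x‖_w ≤ ‖A.mulVec w‖_w · ‖x‖_w for all x, with equality attained at x = w (note ‖w‖_w = 1). That is, the operator norm of A induced by the w-norm equals ‖A.mulVec w‖_w. -/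
open Finset

/-- The `w`-norm of a vector `x`: the maximum over `i` of `|x i| / w i`. -/
noncomputable def wNorm {ι : Type*} [Fintype ι] [Nonempty ι] (w x : ι → ℝ) : ℝ :=
  Finset.univ.sup' Finset.univ_nonempty (fun i => |x i| / w i)

theorem wNorm_le_coord_aux {ι : Type*} [Fintype ι] [Nonempty ι] (w x : ι → ℝ) (i : ι) :
    |x i| / w i ≤ wNorm w x :=
  Finset.le_sup' (fun i => |x i| / w i) (Finset.mem_univ i)

theorem wNorm_nonneg_aux {ι : Type*} [Fintype ι] [Nonempty ι] (w x : ι → ℝ)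
    (hw : ∀ i, 0 < w i) : 0 ≤ wNorm w x :=
  le_trans (div_nonneg (abs_nonneg _) (hw (Classical.arbitrary ι)).le)
    (wNorm_le_coord_aux w x (Classical.arbitrary ι))

/-- The operator norm of `A` induced by the `w`-norm equals `‖A.mulVec w‖_w`. -/
theorem wNorm_opNorm_eq_wNorm_mulVec
    {ι : Type*} [Fintype ι] [Nonempty ι]
    (A : Matrix ι ι ℝ) (w : ι → ℝ)
    (hA : ∀ i j, 0 ≤ A i j)
    (hw : ∀ i, 0 < w i) :
    IsGreatest {y : ℝ | ∃ x : ι → ℝ, wNorm w x ≤ 1 ∧ y = wNorm w (A.mulVec x)}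
      (wNorm w (A.mulVec w)) ∧
    (∀ x : ι → ℝ, wNorm w (A.mulVec x) ≤ wNorm w (A.mulVec w) * wNorm w x) ∧
    wNorm w w = 1 := by
  have h1 : wNorm w w = 1 := by
    have : (fun i => |w i| / w i) = fun _ => (1 : ℝ) := by
      funext i
      rw [abs_of_pos (hw i), div_self (hw i).ne']
    unfold wNorm
    rw [this, Finset.sup'_const]
  have h2 : ∀ x : ι → ℝ, wNorm w (A.mulVec x) ≤ wNorm w (A.mulVec w) * wNorm w x := by
    intro x
    refine Finset.sup'_le _ _ fun i _ => ?_
    have hx : ∀ j, |x j| ≤ wNorm w x * w j := fun j =>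
      (div_le_iff₀ (hw j)).1 (wNorm_le_coord_aux w x j)
    have h3 : |A.mulVec x i| ≤ A.mulVec w i * wNorm w x := by
      simp only [Matrix.mulVec, dotProduct]
      refine (Finset.abs_sum_le_sum_abs _ _).trans ?_
      rw [Finset.sum_mul]
      refine Finset.sum_le_sum fun j _ => ?_
      rw [abs_mul, abs_of_nonneg (hA i j)]
      calc A i j * |x j| ≤ A i j * (wNorm w x * w j) :=
            mul_le_mul_of_nonneg_left (hx j) (hA i j)
        _ = A i j * w j * wNorm w x := by ring
    have h4 : A.mulVec w i ≤ wNorm w (A.mulVec w) * w i :=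
      (le_abs_self _).trans ((div_le_iff₀ (hw i)).1 (wNorm_le_coord_aux w (A.mulVec w) i))
    rw [div_le_iff₀ (hw i)]
    calc |A.mulVec x i| ≤ A.mulVec w i * wNorm w x := h3
      _ ≤ (wNorm w (A.mulVec w) * w i) * wNorm w x :=
          mul_le_mul_of_nonneg_right h4 (wNorm_nonneg_aux w x hw)
      _ = wNorm w (A.mulVec w) * wNorm w x * w i := by ring
  refine ⟨⟨⟨w, h1.le, rfl⟩, ?_⟩, h2, h1⟩
  rintro y ⟨x, hx, rfl⟩
  exact (h2 x).trans (mul_le_of_le_one_right (wNorm_nonneg_aux w _ hw) hx)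
end

section
/- Let ι be a nonempty finite index type, A : Matrix ι ι ℝ an entrywise nonnegative matrix, σ s : ℝ with s > σ, and w : ι → ℝ a σ-suitable vector for A. Then the matrix s • 1 - A (where 1 is the identity matrix) is invertible, i.e., IsUnit (s • (1 : Matrix ι ι ℝ) - A). -/
theorem isUnit_smul_one_sub_of_suitable
    {ι : Type*} [Fintype ι] [Nonempty ι] [DecidableEq ι]
    (A : Matrix ι ι ℝ) (σ s : ℝ) (w : ι → ℝ)
    (hA : ∀ i j, 0 ≤ A i j)
    (hw : ∀ i, 0 < w i)
    (hsuit : ∀ i, A.mulVec w i ≤ σ * w i)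
    (hs : σ < s) :
    IsUnit (s • (1 : Matrix ι ι ℝ) - A) := by
  rw [Matrix.isUnit_iff_isUnit_det, isUnit_iff_ne_zero]
  intro hdet
  obtain ⟨v, hv, hMv⟩ := Matrix.exists_mulVec_eq_zero_iff.mpr hdet
  obtain ⟨i, hi⟩ := Finite.exists_max (fun i => |v i| / w i)
  set c := |v i| / w i with hc
  have hle : ∀ j, |v j| ≤ c * w j := fun j => (div_le_iff₀ (hw j)).mp (hi j)
  have hci : |v i| = c * w i := by
    rw [hc, div_mul_cancel₀ _ (hw i).ne']
  have hcpos : 0 < c := by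
    obtain ⟨j, hj⟩ := Function.ne_iff.mp hv
    exact (div_pos (abs_pos.mpr hj) (hw j)).trans_le (hi j)
  have heq : s * v i = ∑ j, A i j * v j := by
    have h := congrFun hMv i
    rw [Matrix.sub_mulVec, Matrix.smul_mulVec, Matrix.one_mulVec] at h
    simp only [Pi.sub_apply, Pi.smul_apply, smul_eq_mul, Pi.zero_apply] at h
    exact sub_eq_zero.mp h
  have h1 : s * |v i| ≤ c * (σ * w i) := by
    calc s * |v i| ≤ |s| * |v i| := by gcongr; exact le_abs_self s
      _ = |∑ j, A i j * v j| := by rw [← abs_mul, heq]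
      _ ≤ ∑ j, |A i j * v j| := Finset.abs_sum_le_sum_abs _ _
      _ ≤ ∑ j, c * (A i j * w j) := by
          refine Finset.sum_le_sum fun j _ => ?_
          rw [abs_mul, abs_of_nonneg (hA i j)]
          have := mul_le_mul_of_nonneg_left (hle j) (hA i j)
          linarith
      _ = c * A.mulVec w i := by rw [← Finset.mul_sum]; rfl
      _ ≤ c * (σ * w i) := by gcongr; exact hsuit i
  have h2 := mul_pos (sub_pos.mpr hs) (mul_pos hcpos (hw i))
  rw [hci] at h1
  linarith
end

section
/- Let ι be a nonempty finite index type, P : Matrix ι ι ℝ an entrywise nonnegative matrix whose rows sum to 1 (∀ i, Σ_j P i j = 1), and α : ℝ with 0 < α < 1. Then for all x b : ι → ℝ, if ((1 : Matrix ι ι ℝ) - α • Pᵀ).mulVec x = b, then Σ_i |x i| ≤ (Σ_i |b i|)/(1 - α). Equivalently, the ℓ₁ operator norm of (1 - α • Pᵀ)⁻¹ is at most 1/(1-α). -/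
open Finset Matrix

theorem pagerank_l1_resolvent_bound
    {ι : Type*} [Fintype ι] [Nonempty ι] [DecidableEq ι]
    (P : Matrix ι ι ℝ) (α : ℝ)
    (hP : ∀ i j, 0 ≤ P i j)
    (hstoch : ∀ i, ∑ j, P i j = 1)
    (hα0 : 0 < α) (hα1 : α < 1) :
    ∀ x b : ι → ℝ, ((1 : Matrix ι ι ℝ) - α • Pᵀ).mulVec x = b →
      ∑ i, |x i| ≤ (∑ i, |b i|) / (1 - α) := by
  intro x b hb
  rw [le_div_iff₀ (by linarith)]
  have h1 : ∀ i, |x i| ≤ |b i| + α * ∑ j, P j i * |x j| := by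
    intro i
    have h := congrFun hb i
    rw [Matrix.sub_mulVec, Matrix.one_mulVec, Matrix.smul_mulVec] at h
    have h2 : (Pᵀ *ᵥ x) i = ∑ j, P j i * x j := rfl
    simp only [Pi.sub_apply, Pi.smul_apply, smul_eq_mul, h2] at h
    have h3 : x i = b i + α * ∑ j, P j i * x j := by linarith
    have h4 : |∑ j, P j i * x j| ≤ ∑ j, P j i * |x j| := by
      refine (Finset.abs_sum_le_sum_abs _ _).trans (le_of_eq ?_)
      refine Finset.sum_congr rfl fun j _ => ?_
      rw [abs_mul, abs_of_nonneg (hP j i)]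
    calc |x i| = |b i + α * ∑ j, P j i * x j| := by rw [← h3]
      _ ≤ |b i| + |α * ∑ j, P j i * x j| := abs_add_le _ _
      _ = |b i| + α * |∑ j, P j i * x j| := by rw [abs_mul, abs_of_pos hα0]
      _ ≤ _ := by gcongr
  have h5 := Finset.sum_le_sum fun i (_ : i ∈ Finset.univ) => h1 i
  have h6 : ∑ i, ∑ j, P j i * |x j| = ∑ j, |x j| := by
    rw [Finset.sum_comm]
    refine Finset.sum_congr rfl fun j _ => ?_
    rw [← Finset.sum_mul, hstoch, one_mul]
  rw [Finset.sum_add_distrib, ← Finset.mul_sum, h6] at h5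
  linarith
end
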